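/- Let γ_d denote the standard Gaussian measure on ℝ^d and let ν be a probability measure on ℝ^d with D_KL(ν‖γ_d) < ∞. Then there exists a coupling π of γ_d and ν such that the straight-line interpolation paths x_t(x,y) = (1−t)x + t·y, which satisfy d/dt x_t(x,y) = y − x for all t ∈ [0,1], have time-integrated expected squared velocity bounded by the KL divergence: ∫₀¹ ( ∫ ‖y − x‖² dπ(x,y) ) dt = ∫ ‖y − x‖² dπ(x,y) ≤ 2·D_KL(ν‖γ_d). (Lemma 4.4 of the paper: the transporting velocity field has expected squared norm at most 2·D_KL(ν‖γ_d).) -/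

import Mathlib

open MeasureTheory ENNReal
open scoped Classical

noncomputable section

/-- A coupling of `μ` and `ν`: a probability measure on the product whose
first marginal is `μ` and whose second marginal is `ν`. -/
def IsCoupling {d : ℕ}
    (π : Measure (EuclideanSpace ℝ (Fin d) × EuclideanSpace ℝ (Fin d)))
    (μ ν : Measure (EuclideanSpace ℝ (Fin d))) : Prop :=
  IsProbabilityMeasure π ∧ π.map Prod.fst = μ ∧ π.map Prod.snd = ν

/-- The Kullback–Leibler divergence `D_KL(ν‖μ) = ∫ log(dν/dμ) dν` when `ν ≪ μ`
(and this integral makes sense), and `+∞` otherwise. -/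
def klDiv {α : Type*} [MeasurableSpace α] (ν μ : Measure α) : ℝ≥0∞ :=
  if ν ≪ μ ∧ Integrable (llr ν μ) ν then ENNReal.ofReal (∫ x, llr ν μ x ∂ν) else ∞

/-- The standard Gaussian measure on `ℝ^d`, with density
`(2π)^(−d/2) exp(−‖x‖²/2)` with respect to Lebesgue measure. -/
def stdGaussian (d : ℕ) : Measure (EuclideanSpace ℝ (Fin d)) :=
  volume.withDensity fun x =>
    ENNReal.ofReal ((2 * Real.pi) ^ (-(d : ℝ) / 2) * Real.exp (-‖x‖ ^ 2 / 2))

section OneDimensional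

open ProbabilityTheory Set Filter Topology

/-- The monotone rearrangement transporting the standard Gaussian measure on `ℝ` to `ν`. -/
def gaussianTransport (ν : Measure ℝ) (x : ℝ) : ℝ :=
  sInf {t | cdf (gaussianReal 0 1) x ≤ cdf ν t}

lemma isOpenPosMeasure_gaussianReal : (gaussianReal 0 1).IsOpenPosMeasure :=
  (gaussianReal_absolutelyContinuous' 0 one_ne_zero).isOpenPosMeasure

lemma strictMono_cdf_of_isOpenPosMeasure (μ : Measure ℝ) [IsProbabilityMeasure μ]
    [μ.IsOpenPosMeasure] : StrictMono (cdf μ) := by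
  intro a b hab
  have h : μ (Ioc a b) = ENNReal.ofReal (cdf μ b - cdf μ a) := by
    conv_lhs => rw [← measure_cdf μ]
    exact StieltjesFunction.measure_Ioc _ _ _
  have hpos : 0 < μ (Ioc a b) :=
    (isOpen_Ioo.measure_pos μ (nonempty_Ioo.2 hab)).trans_le (measure_mono Ioo_subset_Ioc_self)
  rw [h, ENNReal.ofReal_pos] at hpos
  linarith

lemma continuous_cdf (μ : Measure ℝ) [IsProbabilityMeasure μ] [NullSingletonClass μ] :
    Continuous (cdf μ) := by
  rw [continuous_iff_continuousAt]
  intro x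
  rw [(monotone_cdf μ).continuousAt_iff_leftLim_eq_rightLim, StieltjesFunction.rightLim_eq]
  have h : ENNReal.ofReal (cdf μ x - Function.leftLim (cdf μ) x) = 0 := by
    rw [← StieltjesFunction.measure_singleton, measure_cdf, measure_singleton]
  rw [ENNReal.ofReal_eq_zero] at h
  linarith [(monotone_cdf μ).leftLim_le (le_refl x)]

lemma strictMono_cdf_gaussianReal : StrictMono (cdf (gaussianReal 0 1)) :=
  have := isOpenPosMeasure_gaussianReal
  strictMono_cdf_of_isOpenPosMeasure _

lemma continuous_cdf_gaussianReal : Continuous (cdf (gaussianReal 0 1)) :=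
  have := nullSingletonClass_gaussianReal (μ := 0) (v := 1) one_ne_zero
  continuous_cdf _

lemma cdf_gaussianReal_pos (x : ℝ) : 0 < cdf (gaussianReal 0 1) x :=
  (cdf_nonneg _ (x - 1)).trans_lt (strictMono_cdf_gaussianReal (by linarith))

lemma cdf_gaussianReal_lt_one (x : ℝ) : cdf (gaussianReal 0 1) x < 1 :=
  (strictMono_cdf_gaussianReal (by linarith : x < x + 1)).trans_le (cdf_le_one _ _)

lemma gaussianTransport_le_iff (ν : Measure ℝ) (x t : ℝ) :
    gaussianTransport ν x ≤ t ↔ cdf (gaussianReal 0 1) x ≤ cdf ν t := by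
  set S := {t | cdf (gaussianReal 0 1) x ≤ cdf ν t} with hS
  have hbdd : BddBelow S := by
    obtain ⟨a, ha⟩ := ((tendsto_cdf_atBot ν).eventually_lt_const (cdf_gaussianReal_pos x)).exists
    refine ⟨a, fun t ht => ?_⟩
    by_contra! h
    exact absurd (ht.trans (monotone_cdf ν h.le)) (not_le.2 ha)
  have hne : S.Nonempty := by
    obtain ⟨a, ha⟩ :=
      ((tendsto_cdf_atTop ν).eventually_const_lt (cdf_gaussianReal_lt_one x)).exists
    exact ⟨a, ha.le⟩
  refine ⟨fun h => ?_, fun h => csInf_le hbdd h⟩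
  have hright : ∀ s, t < s → cdf (gaussianReal 0 1) x ≤ cdf ν s := by
    intro s hs
    obtain ⟨r, hr, hrs⟩ := exists_lt_of_csInf_lt hne (lt_of_le_of_lt h hs)
    exact hr.trans (monotone_cdf ν hrs.le)
  have hcont : Tendsto (cdf ν) (𝓝[>] t) (𝓝 (cdf ν t)) :=
    ((cdf ν).right_continuous t).mono Ioi_subset_Ici_self
  exact ge_of_tendsto hcont (eventually_nhdsWithin_of_forall fun s hs => hright s hs)

lemma monotone_gaussianTransport (ν : Measure ℝ) : Monotone (gaussianTransport ν) := fun _ _ h =>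
  (gaussianTransport_le_iff ν _ _).2
    ((monotone_cdf _ h).trans ((gaussianTransport_le_iff ν _ _).1 le_rfl))

lemma gaussianReal_setOf_cdf_le {u : ℝ} (h0 : 0 ≤ u) (h1 : u ≤ 1) :
    gaussianReal 0 1 {x | cdf (gaussianReal 0 1) x ≤ u} = ENNReal.ofReal u := by
  rcases h0.eq_or_lt with rfl | h0
  · simp [(cdf_gaussianReal_pos _).not_ge]
  rcases h1.eq_or_lt with rfl | h1
  · simp [cdf_le_one]
  obtain ⟨a, ha⟩ : ∃ a, cdf (gaussianReal 0 1) a = u :=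
    mem_range_of_exists_le_of_exists_ge continuous_cdf_gaussianReal
      ((tendsto_cdf_atBot _).eventually_le_const h0).exists
      ((tendsto_cdf_atTop _).eventually_const_le h1).exists
  rw [← ha, ofReal_cdf]
  congr 1
  ext x
  exact strictMono_cdf_gaussianReal.le_iff_le

lemma map_gaussianTransport (ν : Measure ℝ) [IsProbabilityMeasure ν] :
    (gaussianReal 0 1).map (gaussianTransport ν) = ν := by
  have hm : Measurable (gaussianTransport ν) := (monotone_gaussianTransport ν).measurable
  have := Measure.isProbabilityMeasure_map (μ := gaussianReal 0 1) hm.aemeasurable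
  refine Measure.ext_of_Iic _ _ fun t => ?_
  rw [Measure.map_apply hm measurableSet_Iic, ← ofReal_cdf,
    ← gaussianReal_setOf_cdf_le (cdf_nonneg ν t) (cdf_le_one ν t)]
  congr 1
  ext x
  exact gaussianTransport_le_iff ν x t

lemma cdf_gaussianTransport (ν : Measure ℝ) [IsProbabilityMeasure ν] [NullSingletonClass ν]
    (x : ℝ) : cdf ν (gaussianTransport ν x) = cdf (gaussianReal 0 1) x := by
  refine le_antisymm ?_ ((gaussianTransport_le_iff ν _ _).1 le_rfl)
  refine le_of_tendsto ((continuous_cdf ν).continuousWithinAt (s := Iio (gaussianTransport ν x)))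
    (eventually_nhdsWithin_of_forall fun t (ht : t < gaussianTransport ν x) => ?_)
  by_contra! h
  exact absurd ((gaussianTransport_le_iff ν x t).2 h.le) (not_le.2 ht)

lemma measurable_gaussianTransport_kernel {α : Type*} [MeasurableSpace α] (κ : Kernel α ℝ)
    [IsMarkovKernel κ] : Measurable fun p : α × ℝ => gaussianTransport (κ p.1) p.2 := by
  refine measurable_of_Iic fun t => ?_
  have h : (fun p : α × ℝ => gaussianTransport (κ p.1) p.2) ⁻¹' Iic t =
      {p | cdf (gaussianReal 0 1) p.2 ≤ (κ p.1 (Iic t)).toReal} := by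
    ext p
    simp [gaussianTransport_le_iff, cdf_eq_real, measureReal_def]
  rw [h]
  refine measurableSet_le (continuous_cdf_gaussianReal.measurable.comp measurable_snd) ?_
  exact ((Kernel.measurable_coe κ measurableSet_Iic).comp measurable_fst).ennreal_toReal

lemma gaussianReal_eq_withDensity_exp (h : ℝ) :
    gaussianReal h 1 = (gaussianReal 0 1).withDensity
      fun x => ENNReal.ofReal (Real.exp (h * x - h ^ 2 / 2)) := by
  rw [gaussianReal_of_var_ne_zero _ one_ne_zero, gaussianReal_of_var_ne_zero _ one_ne_zero,
    ← withDensity_mul _ (measurable_gaussianPDF _ _) (by fun_prop)]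
  congr 1
  ext x
  rw [Pi.mul_apply, gaussianPDF, gaussianPDF, ← ENNReal.ofReal_mul (gaussianPDFReal_nonneg _ _ _),
    gaussianPDFReal, gaussianPDFReal, mul_assoc (_)⁻¹, ← Real.exp_add]
  congr 3
  push_cast
  ring

lemma memLp_exp_mul_gaussianReal (a : ℝ) :
    MemLp (fun x => Real.exp (a * x)) 2 (gaussianReal 0 1) := by
  rw [memLp_two_iff_integrable_sq (by fun_prop)]
  refine (integrable_exp_mul_gaussianReal (2 * a)).congr (ae_of_all _ fun x => ?_)
  simp only
  rw [← Real.exp_nat_mul]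
  push_cast
  ring_nf

lemma memLp_exp_mul_sub_gaussianReal (h : ℝ) :
    MemLp (fun x => Real.exp (h * x - h ^ 2 / 2)) 2 (gaussianReal 0 1) := by
  refine ((memLp_exp_mul_gaussianReal h).const_mul (Real.exp (-(h ^ 2 / 2)))).congr_norm
    (by fun_prop) (ae_of_all _ fun x => ?_)
  rw [← Real.exp_add]
  ring_nf

lemma integrable_mul_of_memLp_two {α : Type*} [MeasurableSpace α] {μ : Measure α} {f g : α → ℝ}
    (hf : MemLp f 2 μ) (hg : MemLp g 2 μ) : Integrable (fun x => f x * g x) μ :=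
  hf.integrable_mul hg

lemma integrable_comp_add_gaussianReal {f : ℝ → ℝ} (hfm : Measurable f)
    (hf : MemLp f 2 (gaussianReal 0 1)) (h : ℝ) :
    Integrable (fun x => f (x + h)) (gaussianReal 0 1) := by
  have hmap : (gaussianReal 0 1).map (fun x => x + h) = gaussianReal h 1 := by
    rw [gaussianReal_map_add_const, zero_add]
  have hintg : Integrable f (gaussianReal h 1) := by
    rw [gaussianReal_eq_withDensity_exp, integrable_withDensity_iff_integrable_smul' (by fun_prop)
      (ae_of_all _ fun _ => ENNReal.ofReal_lt_top)]
    simp only [ENNReal.toReal_ofReal (Real.exp_nonneg _), smul_eq_mul]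
    exact integrable_mul_of_memLp_two (memLp_exp_mul_sub_gaussianReal h) hf
  rw [← hmap] at hintg
  exact (integrable_map_measure hfm.aestronglyMeasurable (by fun_prop)).1 hintg

lemma integral_comp_add_gaussianReal {f : ℝ → ℝ} (hfm : Measurable f) (h : ℝ) :
    ∫ x, f (x + h) ∂gaussianReal 0 1 =
      ∫ x, Real.exp (h * x - h ^ 2 / 2) * f x ∂gaussianReal 0 1 := by
  have hmap : (gaussianReal 0 1).map (fun x => x + h) = gaussianReal h 1 := by
    rw [gaussianReal_map_add_const, zero_add]
  rw [← integral_map (φ := fun x => x + h) (by fun_prop) hfm.aestronglyMeasurable, hmap,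
    gaussianReal_eq_withDensity_exp, integral_withDensity_eq_integral_toReal_smul (by fun_prop)
      (ae_of_all _ fun _ => ENNReal.ofReal_lt_top)]
  simp only [ENNReal.toReal_ofReal (Real.exp_nonneg _), smul_eq_mul]

lemma abs_exp_sub_one_le_mul_exp_abs (u : ℝ) : |Real.exp u - 1| ≤ |u| * Real.exp |u| := by
  rcases le_total 0 u with hu | hu
  · rw [abs_of_nonneg hu, abs_of_nonneg (by linarith [Real.add_one_le_exp u])]
    have h1 := Real.add_one_le_exp (-u)
    have h2 : Real.exp (-u) * Real.exp u = 1 := by rw [← Real.exp_add]; simp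
    nlinarith [Real.exp_pos u]
  · rw [abs_of_nonpos hu, abs_of_nonpos (by linarith [Real.exp_le_one_iff.2 hu])]
    nlinarith [Real.add_one_le_exp u, Real.one_le_exp (x := -u) (by linarith)]

lemma abs_exp_sub_one_div_le {h : ℝ} (h0 : 0 < h) (h1 : h ≤ 1) (x : ℝ) :
    |(Real.exp (h * x - h ^ 2 / 2) - 1) / h| ≤
      Real.exp 2 * (Real.exp (2 * x) + Real.exp (-2 * x)) := by
  have hu : |h * x - h ^ 2 / 2| ≤ h * (|x| + 1) := by
    refine (abs_sub _ _).trans ?_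
    rw [abs_mul, abs_of_pos h0, abs_of_nonneg (by positivity : 0 ≤ h ^ 2 / 2)]
    nlinarith
  have hu' : |h * x - h ^ 2 / 2| ≤ |x| + 1 := hu.trans (by nlinarith [abs_nonneg x])
  rw [abs_div, abs_of_pos h0, div_le_iff₀ h0]
  calc |Real.exp (h * x - h ^ 2 / 2) - 1|
      ≤ |h * x - h ^ 2 / 2| * Real.exp |h * x - h ^ 2 / 2| := abs_exp_sub_one_le_mul_exp_abs _
    _ ≤ (h * (|x| + 1)) * Real.exp (|x| + 1) := by gcongr
    _ ≤ (h * Real.exp (|x| + 1)) * Real.exp (|x| + 1) := by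
        gcongr
        linarith [Real.add_one_le_exp (|x| + 1)]
    _ = Real.exp 2 * Real.exp (2 * |x|) * h := by
        rw [mul_assoc, ← Real.exp_add, ← Real.exp_add]; ring_nf
    _ ≤ Real.exp 2 * (Real.exp (2 * x) + Real.exp (-2 * x)) * h := by
        gcongr
        rcases abs_cases x with ⟨hx, -⟩ | ⟨hx, -⟩ <;> rw [hx]
        · linarith [Real.exp_pos (-2 * x)]
        · rw [show 2 * -x = -2 * x by ring]
          linarith [Real.exp_pos (2 * x)]

lemma tendsto_integral_diffQuot_gaussianReal {f : ℝ → ℝ} (hfm : Measurable f)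
    (hf : MemLp f 2 (gaussianReal 0 1)) :
    Tendsto (fun n : ℕ => ∫ x, (f (x + 1 / ((n : ℝ) + 1)) - f x) / (1 / ((n : ℝ) + 1))
      ∂gaussianReal 0 1) atTop (𝓝 (∫ x, x * f x ∂gaussianReal 0 1)) := by
  have hf1 : Integrable f (gaussianReal 0 1) := hf.integrable (by norm_num)
  have hrw : ∀ n : ℕ, ∫ x, (f (x + 1 / ((n : ℝ) + 1)) - f x) / (1 / ((n : ℝ) + 1))
      ∂gaussianReal 0 1 =
        ∫ x, (Real.exp ((1 / ((n : ℝ) + 1)) * x - (1 / ((n : ℝ) + 1)) ^ 2 / 2) - 1)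
          / (1 / ((n : ℝ) + 1)) * f x ∂gaussianReal 0 1 := by
    intro n
    set h : ℝ := 1 / ((n : ℝ) + 1)
    rw [integral_div, integral_sub (integrable_comp_add_gaussianReal hfm hf h) hf1,
      integral_comp_add_gaussianReal hfm h,
      ← integral_sub (integrable_mul_of_memLp_two (memLp_exp_mul_sub_gaussianReal h) hf) hf1,
      ← integral_div]
    congr 1
    ext x
    ring
  simp_rw [hrw]
  refine tendsto_integral_of_dominated_convergence
    (fun x => (Real.exp 2 * (Real.exp (2 * x) + Real.exp (-2 * x))) * |f x|)
    (fun n => by fun_prop) ?_ (fun n => ae_of_all _ fun x => ?_) (ae_of_all _ fun x => ?_)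
  · exact integrable_mul_of_memLp_two (((memLp_exp_mul_gaussianReal 2).add
      (memLp_exp_mul_gaussianReal (-2))).const_mul _) hf.abs
  · rw [norm_mul, Real.norm_eq_abs, Real.norm_eq_abs]
    gcongr
    refine abs_exp_sub_one_div_le (by positivity) ?_ x
    rw [div_le_one (by positivity)]
    linarith [(Nat.cast_nonneg n : (0 : ℝ) ≤ n)]
  · refine Tendsto.mul_const _ ?_
    have hd : HasDerivAt (fun h : ℝ => Real.exp (h * x - h ^ 2 / 2)) x 0 := by
      have h1 : HasDerivAt (fun h : ℝ => h * x - h ^ 2 / 2) x 0 := by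
        simpa using ((hasDerivAt_id (0 : ℝ)).mul_const x).fun_sub
          (((hasDerivAt_id (0 : ℝ)).fun_pow 2).div_const 2)
      simpa using h1.exp
    have ht := hd.tendsto_slope_zero_right
    have hn : Tendsto (fun n : ℕ => 1 / ((n : ℝ) + 1)) atTop (𝓝[>] 0) :=
      tendsto_nhdsWithin_iff.2 ⟨tendsto_one_div_add_atTop_nhds_zero_nat,
        Eventually.of_forall fun n => by simp only [mem_Ioi]; positivity⟩
    refine (ht.comp hn).congr fun n => ?_
    simp [div_eq_inv_mul]

/-- Gaussian integration by parts for a monotone function: only an inequality survives, as the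
singular part of the derivative is discarded. -/
lemma lintegral_deriv_le_integral_mul_gaussianReal {f : ℝ → ℝ} (hmono : Monotone f)
    (hf : MemLp f 2 (gaussianReal 0 1)) :
    ∫⁻ x, ENNReal.ofReal (deriv f x) ∂gaussianReal 0 1 ≤
      ENNReal.ofReal (∫ x, x * f x ∂gaussianReal 0 1) := by
  have hfm : Measurable f := hmono.measurable
  set q : ℕ → ℝ → ℝ := fun n x => (f (x + 1 / ((n : ℝ) + 1)) - f x) / (1 / ((n : ℝ) + 1)) with hq
  have hq0 : ∀ n x, 0 ≤ q n x := fun n x => div_nonneg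
    (sub_nonneg.2 (hmono (le_add_of_nonneg_right (by positivity)))) (by positivity)
  have hn : Tendsto (fun n : ℕ => 1 / ((n : ℝ) + 1)) atTop (𝓝[>] 0) :=
    tendsto_nhdsWithin_iff.2 ⟨tendsto_one_div_add_atTop_nhds_zero_nat,
      Eventually.of_forall fun n => by simp only [mem_Ioi]; positivity⟩
  have hlim : ∀ᵐ x ∂gaussianReal 0 1, ENNReal.ofReal (deriv f x) =
      liminf (fun n => ENNReal.ofReal (q n x)) atTop := by
    filter_upwards [gaussianReal_absolutelyContinuous 0 one_ne_zero hmono.ae_differentiableAt]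
      with x hx
    refine (Tendsto.liminf_eq (ENNReal.tendsto_ofReal ?_)).symm
    refine (hx.hasDerivAt.tendsto_slope_zero_right.comp hn).congr fun n => ?_
    simp [q, div_eq_inv_mul]
  have hintg : ∀ n, ∫⁻ x, ENNReal.ofReal (q n x) ∂gaussianReal 0 1 =
      ENNReal.ofReal (∫ x, q n x ∂gaussianReal 0 1) := fun n =>
    (ofReal_integral_eq_lintegral_ofReal
      (((integrable_comp_add_gaussianReal hfm hf _).sub (hf.integrable (by norm_num))).div_const _)
      (ae_of_all _ (hq0 n))).symm
  rw [lintegral_congr_ae hlim]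
  refine (lintegral_liminf_le fun n => by fun_prop).trans (le_of_eq ?_)
  simp_rw [hintg]
  exact (ENNReal.tendsto_ofReal (tendsto_integral_diffQuot_gaussianReal hfm hf)).liminf_eq

lemma integrable_exp_sq_div_four_gaussianReal :
    Integrable (fun x => Real.exp (x ^ 2 / 4)) (gaussianReal 0 1) := by
  rw [gaussianReal_of_var_ne_zero _ one_ne_zero, integrable_withDensity_iff_integrable_smul'
    (measurable_gaussianPDF _ _) (ae_of_all _ fun _ => gaussianPDF_lt_top)]
  simp only [toReal_gaussianPDF, smul_eq_mul]
  refine ((integrable_exp_neg_mul_sq (b := 1 / 4) (by norm_num)).const_mul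
    (√(2 * Real.pi))⁻¹).congr (ae_of_all _ fun x => ?_)
  simp only [gaussianPDFReal]
  rw [mul_assoc, ← Real.exp_add]
  congr 1
  · simp
  · congr 1
    push_cast
    ring

lemma mul_le_mul_log_sub_add_exp {r : ℝ} (hr : 0 ≤ r) (b : ℝ) :
    r * b ≤ r * Real.log r - r + Real.exp b := by
  rcases hr.eq_or_lt with rfl | hr
  · simp [Real.exp_nonneg]
  have h1 := Real.add_one_le_exp (b - Real.log r)
  rw [Real.exp_sub, Real.exp_log hr, le_div_iff₀ hr] at h1
  nlinarith

lemma integrable_sq_of_integrable_llr_gaussianReal {ν : Measure ℝ} [IsProbabilityMeasure ν]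
    (hac : ν ≪ gaussianReal 0 1) (hintg : Integrable (llr ν (gaussianReal 0 1)) ν) :
    Integrable (fun y => y ^ 2) ν := by
  have hlog := (integrable_rnDeriv_mul_log_iff hac).2 hintg
  have hr : Integrable (fun x => (ν.rnDeriv (gaussianReal 0 1) x).toReal) (gaussianReal 0 1) :=
    Measure.integrable_toReal_rnDeriv
  have hb : Integrable (fun y : ℝ => y ^ 2 / 4) ν := by
    rw [← integrable_toReal_rnDeriv_mul_iff hac]
    refine ((hlog.sub hr).add integrable_exp_sq_div_four_gaussianReal).mono'
      (Measurable.aestronglyMeasurable (by fun_prop)) (ae_of_all _ fun y => ?_)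
    rw [Real.norm_of_nonneg (by positivity)]
    exact mul_le_mul_log_sub_add_exp ENNReal.toReal_nonneg _
  refine (hb.const_mul 4).congr (ae_of_all _ fun y => ?_)
  ring

lemma integral_sq_gaussianReal : ∫ x, x ^ 2 ∂gaussianReal 0 1 = 1 := by
  have h := variance_fun_id_gaussianReal (μ := 0) (v := 1)
  rw [variance_of_integral_eq_zero (by fun_prop) integral_id_gaussianReal] at h
  simpa using h

lemma log_gaussianPDFReal (x : ℝ) :
    Real.log (gaussianPDFReal 0 1 x) = Real.log (√(2 * Real.pi))⁻¹ - x ^ 2 / 2 := by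
  rw [gaussianPDFReal, Real.log_mul (by positivity) (Real.exp_ne_zero _), Real.log_exp]
  simp
  ring

lemma ae_hasDerivAt_cdf (ν : Measure ℝ) [IsProbabilityMeasure ν] :
    ∀ᵐ x, HasDerivAt (cdf ν) (ν.rnDeriv volume x).toReal x := by
  have h := (cdf ν).ae_hasDerivAt
  rwa [measure_cdf] at h

/-- The Monge–Ampère equation satisfied by the monotone rearrangement, in logarithmic form. -/
lemma ae_llr_gaussianTransport {ν : Measure ℝ} [IsProbabilityMeasure ν]
    (hac : ν ≪ gaussianReal 0 1) :
    ∀ᵐ x ∂gaussianReal 0 1, 0 < deriv (gaussianTransport ν) x ∧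
      llr ν (gaussianReal 0 1) (gaussianTransport ν x) =
        (gaussianTransport ν x ^ 2 - x ^ 2) / 2 - Real.log (deriv (gaussianTransport ν) x) := by
  have hγ : gaussianReal 0 1 ≪ volume := gaussianReal_absolutelyContinuous 0 one_ne_zero
  have hm : Measurable (gaussianTransport ν) := (monotone_gaussianTransport ν).measurable
  have : NullSingletonClass ν := ⟨fun x => hac <| by
    have := nullSingletonClass_gaussianReal (μ := 0) (v := 1) one_ne_zero
    exact measure_singleton x⟩
  have htarget : ∀ᵐ y ∂ν, HasDerivAt (cdf ν)
      ((ν.rnDeriv (gaussianReal 0 1) y).toReal * gaussianPDFReal 0 1 y) y ∧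
      0 < (ν.rnDeriv (gaussianReal 0 1) y).toReal := by
    filter_upwards [(hac.trans hγ) (ae_hasDerivAt_cdf ν),
      (hac.trans hγ) (Measure.rnDeriv_mul_rnDeriv (κ := volume) hac),
      (hac.trans hγ) (rnDeriv_gaussianReal 0 1), Measure.rnDeriv_pos hac,
      hac (ν.rnDeriv_lt_top (gaussianReal 0 1))] with y h1 h2 h3 h4 h5
    refine ⟨?_, ENNReal.toReal_pos h4.ne' h5.ne⟩
    rwa [← h2, Pi.mul_apply, ENNReal.toReal_mul, h3, toReal_gaussianPDF] at h1
  rw [← map_gaussianTransport ν] at htarget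
  filter_upwards [ae_of_ae_map hm.aemeasurable htarget,
    hγ (monotone_gaussianTransport ν).ae_differentiableAt,
    hγ (ae_hasDerivAt_cdf (gaussianReal 0 1)), hγ (rnDeriv_gaussianReal 0 1)]
    with x hy hT hΦ hpdf
  rw [map_gaussianTransport ν] at hy
  obtain ⟨hF, hr⟩ := hy
  rw [hpdf, toReal_gaussianPDF] at hΦ
  have hcomp := hF.comp x hT.hasDerivAt
  rw [show cdf ν ∘ gaussianTransport ν = cdf (gaussianReal 0 1) from
    funext (cdf_gaussianTransport ν)] at hcomp
  have heq := hcomp.unique hΦ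
  have hp := gaussianPDFReal_pos 0 1 x one_ne_zero
  have hpT := gaussianPDFReal_pos 0 1 (gaussianTransport ν x) one_ne_zero
  have hd : 0 < deriv (gaussianTransport ν) x := by
    rw [← heq] at hp
    exact pos_of_mul_pos_right hp (by positivity)
  refine ⟨hd, ?_⟩
  have hlog := congrArg Real.log heq
  rw [Real.log_mul (by positivity) hd.ne', Real.log_mul hr.ne' hpT.ne', log_gaussianPDFReal,
    log_gaussianPDFReal] at hlog
  rw [llr]
  linarith

lemma klDiv_eq_ofReal_integral_llr {α : Type*} [MeasurableSpace α] {ν μ : Measure α}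
    [IsProbabilityMeasure ν] [IsProbabilityMeasure μ] (hac : ν ≪ μ)
    (hintg : Integrable (llr ν μ) ν) :
    InformationTheory.klDiv ν μ = ENNReal.ofReal (∫ x, llr ν μ x ∂ν) := by
  rw [InformationTheory.klDiv_of_ac_of_integrable hac hintg]
  simp

/-- **Talagrand's transport inequality** on the real line, for the monotone rearrangement. -/
theorem lintegral_sq_gaussianTransport_sub_le (ν : Measure ℝ) [IsProbabilityMeasure ν] :
    ∫⁻ x, ENNReal.ofReal ((gaussianTransport ν x - x) ^ 2) ∂gaussianReal 0 1 ≤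
      2 * InformationTheory.klDiv ν (gaussianReal 0 1) := by
  by_cases htop : InformationTheory.klDiv ν (gaussianReal 0 1) = ∞
  · simp [htop]
  obtain ⟨hac, hintg⟩ := InformationTheory.klDiv_ne_top_iff.1 htop
  set T := gaussianTransport ν with hTdef
  have hmono : Monotone T := monotone_gaussianTransport ν
  have hm : Measurable T := hmono.measurable
  have hmap : (gaussianReal 0 1).map T = ν := map_gaussianTransport ν
  have hT2 : Integrable (fun x => T x ^ 2) (gaussianReal 0 1) := by
    have h := integrable_sq_of_integrable_llr_gaussianReal hac hintg
    nth_rw 1 [← hmap] at h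
    exact (integrable_map_measure (by fun_prop) hm.aemeasurable).1 h
  have hT : MemLp T 2 (gaussianReal 0 1) :=
    (memLp_two_iff_integrable_sq hm.aestronglyMeasurable).2 hT2
  have hid : MemLp (fun x : ℝ => x) 2 (gaussianReal 0 1) := memLp_id_gaussianReal 2
  have hxT : Integrable (fun x => x * T x) (gaussianReal 0 1) := integrable_mul_of_memLp_two hid hT
  have hx2 : Integrable (fun x : ℝ => x ^ 2) (gaussianReal 0 1) := hid.integrable_sq
  have hd0 : ∀ x, 0 ≤ deriv T x := fun x => hmono.deriv_nonneg
  have hbp := lintegral_deriv_le_integral_mul_gaussianReal hmono hT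
  have hdint : Integrable (deriv T) (gaussianReal 0 1) :=
    (lintegral_ofReal_ne_top_iff_integrable (measurable_deriv T).aestronglyMeasurable
      (ae_of_all _ hd0)).1 (hbp.trans_lt ENNReal.ofReal_lt_top).ne
  have hae := ae_llr_gaussianTransport hac
  have hdle : ∫ x, deriv T x ∂gaussianReal 0 1 ≤ ∫ x, x * T x ∂gaussianReal 0 1 := by
    rw [← ofReal_integral_eq_lintegral_ofReal hdint (ae_of_all _ hd0)] at hbp
    have hpos : 0 < ∫ x, deriv T x ∂gaussianReal 0 1 := by
      rw [integral_pos_iff_support_of_nonneg_ae (ae_of_all _ hd0) hdint]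
      have hsupp : gaussianReal 0 1 (Function.support (deriv T)) = gaussianReal 0 1 univ :=
        measure_congr (by
          filter_upwards [hae] with x hx
          exact propext ⟨fun _ => trivial, fun _ => hx.1.ne'⟩)
      rw [hsupp]
      simp
    by_contra! h
    exact absurd hbp (not_le.2 ((ENNReal.ofReal_lt_ofReal_iff hpos).2 h))
  have hllr : Integrable (fun x => llr ν (gaussianReal 0 1) (T x)) (gaussianReal 0 1) := by
    have h := hintg
    nth_rw 2 [← hmap] at h
    exact (integrable_map_measure (stronglyMeasurable_llr _ _).aestronglyMeasurable
      hm.aemeasurable).1 h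
  have hllr_eq : ∫ y, llr ν (gaussianReal 0 1) y ∂ν =
      ∫ x, llr ν (gaussianReal 0 1) (T x) ∂gaussianReal 0 1 := by
    have h := integral_map (μ := gaussianReal 0 1) hm.aemeasurable
      (f := llr ν (gaussianReal 0 1)) (stronglyMeasurable_llr _ _).aestronglyMeasurable
    rwa [hmap] at h
  have hle : ∫ x, (T x - x) ^ 2 ∂gaussianReal 0 1 ≤
      2 * ∫ y, llr ν (gaussianReal 0 1) y ∂ν := by
    have h1 : Integrable (fun x => llr ν (gaussianReal 0 1) (T x) - x * T x) (gaussianReal 0 1) :=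
      hllr.sub hxT
    have h2 : Integrable (fun x => llr ν (gaussianReal 0 1) (T x) - x * T x + x ^ 2)
      (gaussianReal 0 1) := h1.add hx2
    have h3 : Integrable (fun x => llr ν (gaussianReal 0 1) (T x) - x * T x + x ^ 2 + deriv T x)
      (gaussianReal 0 1) := h2.add hdint
    have hbound : ∫ x, (T x - x) ^ 2 ∂gaussianReal 0 1 ≤ ∫ x, 2 *
        (llr ν (gaussianReal 0 1) (T x) - x * T x + x ^ 2 + deriv T x - 1) ∂gaussianReal 0 1 := by
      refine integral_mono_ae (f := fun x => (T x - x) ^ 2) (hT.sub hid).integrable_sq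
        ((h3.sub (integrable_const 1)).const_mul 2) ?_
      filter_upwards [hae] with x hx
      have hlog := Real.log_le_sub_one_of_pos hx.1
      rw [hx.2]
      nlinarith
    rw [integral_const_mul, integral_sub h3 (integrable_const 1), integral_add h2 hdint,
      integral_add h1 hx2, integral_sub hllr hxT, integral_sq_gaussianReal] at hbound
    simp only [integral_const, probReal_univ, smul_eq_mul, mul_one] at hbound
    rw [hllr_eq]
    linarith
  have hsq : Integrable (fun x => (T x - x) ^ 2) (gaussianReal 0 1) := (hT.sub hid).integrable_sq
  rw [klDiv_eq_ofReal_integral_llr hac hintg, ← ofReal_integral_eq_lintegral_ofReal hsq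
      (ae_of_all _ fun x => sq_nonneg _)]
  refine (ENNReal.ofReal_le_ofReal hle).trans (le_of_eq ?_)
  rw [ENNReal.ofReal_mul zero_le_two, ENNReal.ofReal_ofNat]

end OneDimensional

section ConditionalDivergence

open ProbabilityTheory InformationTheory

lemma lintegral_klDiv_kernel_le {α β : Type*} {mα : MeasurableSpace α} {mβ : MeasurableSpace β}
    [MeasurableSpace.CountableOrCountablyGenerated α β] (μ : Measure α) [IsProbabilityMeasure μ]
    (κ η : Kernel α β) [IsMarkovKernel κ] [IsMarkovKernel η] :
    ∫⁻ a, InformationTheory.klDiv (κ a) (η a) ∂μ ≤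
      InformationTheory.klDiv (μ ⊗ₘ κ) (μ ⊗ₘ η) := by
  by_cases hac : μ ⊗ₘ κ ≪ μ ⊗ₘ η
  swap
  · simp [klDiv_of_not_ac hac]
  have hker : ∀ᵐ a ∂μ, κ a ≪ η a := hac.kernel_of_compProd
  have hmeas : Measurable fun p : α × β => κ.rnDeriv η p.1 p.2 := Kernel.measurable_rnDeriv κ η
  have hdens : μ ⊗ₘ κ = (μ ⊗ₘ η).withDensity fun p => κ.rnDeriv η p.1 p.2 := by
    rw [← Measure.compProd_withDensity (Kernel.measurable_rnDeriv κ η)]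
    refine Measure.compProd_congr ?_
    filter_upwards [hker] with a ha
    exact (Kernel.withDensity_rnDeriv_eq ha).symm
  have hrn : (μ ⊗ₘ κ).rnDeriv (μ ⊗ₘ η) =ᵐ[μ ⊗ₘ η] fun p => κ.rnDeriv η p.1 p.2 := by
    rw [hdens]
    exact Measure.rnDeriv_withDensity _ hmeas
  have hcongr : ∫⁻ p, ENNReal.ofReal (klFun ((μ ⊗ₘ κ).rnDeriv (μ ⊗ₘ η) p).toReal) ∂(μ ⊗ₘ η) =
      ∫⁻ p, ENNReal.ofReal (klFun (κ.rnDeriv η p.1 p.2).toReal) ∂(μ ⊗ₘ η) :=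
    lintegral_congr_ae (by filter_upwards [hrn] with p hp; rw [hp])
  rw [klDiv_eq_lintegral_klFun_of_ac hac, hcongr, Measure.lintegral_compProd (by fun_prop)]
  refine le_of_eq (lintegral_congr_ae ?_)
  filter_upwards [hker] with a ha
  rw [klDiv_eq_lintegral_klFun_of_ac ha]
  refine lintegral_congr_ae ?_
  filter_upwards [Kernel.rnDeriv_eq_rnDeriv_measure (κ := κ) (η := η) (a := a)] with b hb
  rw [hb]

end ConditionalDivergence

section StandardGaussian

open ProbabilityTheory

lemma integrable_stdGaussian_density (d : ℕ) :
    Integrable (fun x : EuclideanSpace ℝ (Fin d) =>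
      (2 * Real.pi) ^ (-(d : ℝ) / 2) * Real.exp (-‖x‖ ^ 2 / 2)) := by
  refine Integrable.const_mul ?_ _
  have h := (GaussianFourier.integrable_cexp_neg_mul_sq_norm_add_of_euclideanSpace
    (b := 1 / 2) (by norm_num) 0 (0 : EuclideanSpace ℝ (Fin d))).norm
  refine h.congr (ae_of_all _ fun x => ?_)
  simp only [Complex.norm_exp]
  congr 1
  simp [← Complex.ofReal_pow]
  ring

instance (d : ℕ) : IsFiniteMeasure (_root_.stdGaussian d) :=
  isFiniteMeasure_withDensity_ofReal (integrable_stdGaussian_density d).2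

/-- The measure `γ_d` defined by its density is the law of a vector with i.i.d. standard Gaussian
coordinates. -/
lemma stdGaussian_eq_map_pi (d : ℕ) :
    _root_.stdGaussian d = (Measure.pi fun _ : Fin d => gaussianReal 0 1).map (WithLp.toLp 2) := by
  rw [map_pi_eq_stdGaussian]
  refine Measure.ext_of_charFun (funext fun t => ?_)
  rw [charFun_stdGaussian, charFun_apply, _root_.stdGaussian,
    integral_withDensity_eq_integral_toReal_smul (by fun_prop) (by simp)]
  have h := GaussianFourier.integral_cexp_neg_mul_sq_norm_add_of_euclideanSpace
    (b := 1 / 2) (by norm_num) Complex.I t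
  have hfun : ∀ x : EuclideanSpace ℝ (Fin d),
      (ENNReal.ofReal ((2 * Real.pi) ^ (-(d : ℝ) / 2) * Real.exp (-‖x‖ ^ 2 / 2))).toReal •
        Complex.exp (inner ℝ x t * Complex.I) = ((2 * Real.pi) ^ (-(d : ℝ) / 2) : ℝ) *
          Complex.exp (-(1 / 2) * ‖x‖ ^ 2 + Complex.I * inner ℝ t x) := by
    intro x
    rw [ENNReal.toReal_ofReal (by positivity), Complex.exp_add, real_inner_comm, Complex.real_smul]
    push_cast
    ring_nf
  simp_rw [hfun]
  rw [integral_const_mul, h, ← mul_assoc]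
  have hconst : (((2 * Real.pi) ^ (-(d : ℝ) / 2) : ℝ) : ℂ) *
      ((Real.pi : ℂ) / (1 / 2)) ^ ((Fintype.card (Fin d) : ℂ) / 2) = 1 := by
    have h2 : ((Real.pi : ℂ) / (1 / 2)) ^ ((Fintype.card (Fin d) : ℂ) / 2) =
        (((2 * Real.pi) ^ ((d : ℝ) / 2) : ℝ) : ℂ) := by
      rw [Complex.ofReal_cpow (by positivity)]
      push_cast
      rw [Fintype.card_fin]
      congr 1
      ring
    rw [h2, ← Complex.ofReal_mul, ← Real.rpow_add (by positivity)]
    simp [neg_div]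
  rw [hconst, one_mul, Complex.I_sq]
  congr 1
  ring

end StandardGaussian

section Tensorization

open ProbabilityTheory InformationTheory

variable {X Y : Type*} [MeasurableSpace X] [MeasurableSpace Y]

/-- The measure `γ` satisfies the transport-entropy inequality for the cost `c`: every probability
measure `ν` can be coupled with `γ` at cost at most twice its divergence from `γ`. -/
def TransportInequality (γ : Measure X) (c : X × X → ℝ≥0∞) : Prop :=
  ∀ ν : Measure X, IsProbabilityMeasure ν → ∃ π : Measure (X × X), IsProbabilityMeasure π ∧
    π.map Prod.fst = γ ∧ π.map Prod.snd = ν ∧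
    ∫⁻ p, c p ∂π ≤ 2 * InformationTheory.klDiv ν γ

lemma TransportInequality.map_equiv {γ : Measure X} [IsProbabilityMeasure γ] {c : X × X → ℝ≥0∞}
    (h : TransportInequality γ c) (e : X ≃ᵐ Y) :
    TransportInequality (γ.map e) fun p => c (e.symm p.1, e.symm p.2) := by
  intro ν hν
  have : IsProbabilityMeasure (ν.map e.symm) :=
    Measure.isProbabilityMeasure_map e.symm.measurable.aemeasurable
  have : IsProbabilityMeasure (γ.map e) :=
    Measure.isProbabilityMeasure_map e.measurable.aemeasurable
  obtain ⟨π, hπ, hfst, hsnd, hcost⟩ := h (ν.map e.symm) inferInstance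
  let E : X × X ≃ᵐ Y × Y := e.prodCongr e
  have hE : (E : X × X → Y × Y) = Prod.map e e := rfl
  refine ⟨π.map E, Measure.isProbabilityMeasure_map E.measurable.aemeasurable, ?_, ?_, ?_⟩
  · rw [Measure.map_map measurable_fst E.measurable, ← hfst,
      Measure.map_map e.measurable measurable_fst]
    rfl
  · rw [Measure.map_map measurable_snd E.measurable,
      show Prod.snd ∘ E = e ∘ Prod.snd from rfl, ← Measure.map_map e.measurable measurable_snd,
      hsnd, e.map_map_symm]
  · rw [lintegral_map_equiv]
    have hkl := klDiv_map_le ν (γ.map e) e.symm.measurable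
    rw [e.map_symm_map] at hkl
    simp only [hE, Prod.map_fst, Prod.map_snd, e.symm_apply_apply]
    exact hcost.trans (by gcongr)

lemma TransportInequality.prod_gaussianReal {γ : Measure X} [IsProbabilityMeasure γ]
    {c : X × X → ℝ≥0∞} (hc : Measurable c) (h : TransportInequality γ c) :
    TransportInequality (γ.prod (gaussianReal 0 1)) fun p =>
      c (p.1.1, p.2.1) + ENNReal.ofReal ((p.2.2 - p.1.2) ^ 2) := by
  intro ν hν
  obtain ⟨π, hπ, hfst, hsnd, hcost⟩ := h ν.fst inferInstance
  set κ := ν.condKernel with hκ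
  have hT := measurable_gaussianTransport_kernel κ
  let Ψ : (X × X) × ℝ → (X × ℝ) × X × ℝ :=
    fun q => ((q.1.1, q.2), (q.1.2, gaussianTransport (κ q.1.2) q.2))
  have hT' : Measurable fun q : (X × X) × ℝ => gaussianTransport (κ q.1.2) q.2 :=
    hT.comp (f := fun q : (X × X) × ℝ => (q.1.2, q.2)) (by fun_prop)
  have hΨ : Measurable Ψ := by fun_prop
  have hsnd' : MeasurePreserving Prod.snd π ν.fst := ⟨measurable_snd, hsnd⟩
  have hfst' : MeasurePreserving Prod.fst π γ := ⟨measurable_fst, hfst⟩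
  refine ⟨(π.prod (gaussianReal 0 1)).map Ψ, Measure.isProbabilityMeasure_map hΨ.aemeasurable,
    ?_, ?_, ?_⟩
  · rw [Measure.map_map measurable_fst hΨ]
    exact (hfst'.prod (MeasurePreserving.id _)).map_eq
  · rw [Measure.map_map measurable_snd hΨ]
    have hcomp : Prod.snd ∘ Ψ = (fun p : X × ℝ => (p.1, gaussianTransport (κ p.1) p.2)) ∘
        Prod.map Prod.snd id := rfl
    have hS : Measurable fun p : X × ℝ => (p.1, gaussianTransport (κ p.1) p.2) := by fun_prop
    rw [hcomp, ← Measure.map_map hS (by fun_prop),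
      (hsnd'.prod (MeasurePreserving.id (gaussianReal 0 1))).map_eq]
    conv_rhs => rw [← ν.disintegrate ν.condKernel]
    ext s hs
    rw [Measure.map_apply hS hs, Measure.prod_apply (hS hs), Measure.compProd_apply hs]
    refine lintegral_congr fun y => ?_
    have hTy : Measurable (gaussianTransport (κ y)) := hT.comp measurable_prodMk_left
    rw [← hκ]
    conv_rhs => rw [← map_gaussianTransport (κ y)]
    rw [Measure.map_apply hTy (measurable_prodMk_left hs)]
    rfl
  · have hchain : InformationTheory.klDiv ν (γ.prod (gaussianReal 0 1)) =
        InformationTheory.klDiv ν.fst γ +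
          InformationTheory.klDiv (ν.fst ⊗ₘ κ) (ν.fst ⊗ₘ Kernel.const X (gaussianReal 0 1)) := by
      rw [← klDiv_compProd_eq_add, Measure.compProd_const, hκ, ν.disintegrate ν.condKernel]
    have hcond := lintegral_klDiv_kernel_le ν.fst κ (Kernel.const X (gaussianReal 0 1))
    rw [lintegral_map (by fun_prop) hΨ, lintegral_add_left (by fun_prop), hchain, mul_add]
    refine add_le_add ?_ ?_
    · rw [lintegral_prod _ (by fun_prop)]
      simpa [Ψ] using hcost
    · calc ∫⁻ q, ENNReal.ofReal (((Ψ q).2.2 - (Ψ q).1.2) ^ 2) ∂π.prod (gaussianReal 0 1)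
          = ∫⁻ p, ∫⁻ z, ENNReal.ofReal ((gaussianTransport (κ p.2) z - z) ^ 2)
              ∂gaussianReal 0 1 ∂π := lintegral_prod _ (by fun_prop)
        _ = ∫⁻ y, ∫⁻ z, ENNReal.ofReal ((gaussianTransport (κ y) z - z) ^ 2)
              ∂gaussianReal 0 1 ∂ν.fst := by
            exact hsnd'.lintegral_comp (Measurable.lintegral_prod_right' (f := fun p : X × ℝ =>
              ENNReal.ofReal ((gaussianTransport (κ p.1) p.2 - p.2) ^ 2)) (by fun_prop))
        _ ≤ ∫⁻ y, 2 * InformationTheory.klDiv (κ y) (gaussianReal 0 1) ∂ν.fst :=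
            lintegral_mono fun y => lintegral_sq_gaussianTransport_sub_le (κ y)
        _ = 2 * ∫⁻ y, InformationTheory.klDiv (κ y) (gaussianReal 0 1) ∂ν.fst :=
            lintegral_const_mul' _ _ (by simp)
        _ ≤ _ := by gcongr; exact hcond

/-- Talagrand's transport inequality for products of standard Gaussian measures. -/
theorem transportInequality_pi_gaussianReal (n : ℕ) :
    TransportInequality (Measure.pi fun _ : Fin n => gaussianReal 0 1) fun p =>
      ∑ i, ENNReal.ofReal ((p.2 i - p.1 i) ^ 2) := by
  induction n with
  | zero =>
    intro ν hν
    refine ⟨(Measure.pi fun _ : Fin 0 => gaussianReal 0 1).prod ν, inferInstance, ?_, ?_, ?_⟩ <;>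
      simp
  | succ n ih =>
    let e : (Fin n → ℝ) × ℝ ≃ᵐ (Fin (n + 1) → ℝ) :=
      MeasurableEquiv.prodComm.trans (MeasurableEquiv.piFinSuccAbove (fun _ => ℝ) 0).symm
    have hmap : ((Measure.pi fun _ : Fin n => gaussianReal 0 1).prod (gaussianReal 0 1)).map e =
        Measure.pi fun _ : Fin (n + 1) => gaussianReal 0 1 := by
      have hpres := (measurePreserving_piFinSuccAbove
        (fun _ : Fin (n + 1) => gaussianReal 0 1) 0).symm
      exact (hpres.comp Measure.measurePreserving_swap).map_eq
    have h := (ih.prod_gaussianReal (by fun_prop)).map_equiv e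
    rw [hmap] at h
    convert h using 2 with p
    rw [Fin.sum_univ_succ, add_comm]
    rfl

theorem transportInequality_stdGaussian (d : ℕ) :
    TransportInequality (_root_.stdGaussian d) fun p => ENNReal.ofReal (‖p.2 - p.1‖ ^ 2) := by
  have h := (transportInequality_pi_gaussianReal d).map_equiv (MeasurableEquiv.toLp 2 (Fin d → ℝ))
  rw [MeasurableEquiv.coe_toLp, ← stdGaussian_eq_map_pi] at h
  convert h using 2 with p
  rw [EuclideanSpace.real_norm_sq_eq, ENNReal.ofReal_sum_of_nonneg fun _ _ => sq_nonneg _]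
  rfl

end Tensorization

/-- **Lemma 4.4**: there is a coupling `π` of the standard Gaussian `γ_d` and `ν` such
that the straight-line interpolation paths `x_t(x,y) = (1−t)x + t·y` have velocity
`y − x` for all `t`, and the time-integrated expected squared velocity—which equals
`∫ ‖y − x‖² dπ(x,y)`—is at most `2·D_KL(ν‖γ_d)`. -/
theorem exists_coupling_velocity_bound {d : ℕ}
    (ν : Measure (EuclideanSpace ℝ (Fin d))) [IsProbabilityMeasure ν]
    (hKL : klDiv ν (stdGaussian d) < ∞) :
    ∃ π : Measure (EuclideanSpace ℝ (Fin d) × EuclideanSpace ℝ (Fin d)),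
      IsCoupling π (stdGaussian d) ν ∧
      (∀ x y : EuclideanSpace ℝ (Fin d), ∀ t : ℝ,
        HasDerivAt (fun s : ℝ => (1 - s) • x + s • y) (y - x) t) ∧
      ∫⁻ p, ENNReal.ofReal (‖p.2 - p.1‖ ^ 2) ∂π ≤ 2 * klDiv ν (stdGaussian d) := by
  have : IsProbabilityMeasure (stdGaussian d) := by
    rw [stdGaussian_eq_map_pi]
    exact Measure.isProbabilityMeasure_map (by fun_prop)
  have hkl : klDiv ν (stdGaussian d) = InformationTheory.klDiv ν (stdGaussian d) := by
    unfold klDiv at hKL ⊢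
    split_ifs at hKL ⊢ with h
    · exact (klDiv_eq_ofReal_integral_llr h.1 h.2).symm
    · exact absurd hKL (lt_irrefl _)
  obtain ⟨π, hπ, hfst, hsnd, hcost⟩ := transportInequality_stdGaussian d ν inferInstance
  refine ⟨π, ⟨hπ, hfst, hsnd⟩, fun x y t => ?_, hkl ▸ hcost⟩
  have h := (((hasDerivAt_id t).const_sub 1).smul_const x).add ((hasDerivAt_id t).smul_const y)
  rw [neg_one_smul, one_smul, neg_add_eq_sub] at h
  exact h
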